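/- Let Ω = {(x₁,x₂) ∈ ℝ² : 0 < x₂ < x₁ < h} be an isosceles right triangle with legs of length h > 0, and let Γ = {x₁ = h, x₂ ∈ [0,h]} be one leg. Let ẑ₀ be the unique root of the equation tan(z) + tanh(z) = 0 in the interval (0,π) (ẑ₀ ≈ 2.3650). Then the sharp constant C₂(Ω,Γ) in the inequality ‖w‖_{L²(Γ)} ≤ C₂‖∇w‖_{L²(Ω)} for all w ∈ H̃¹(Ω,Γ) is equal to ( (ẑ₀/h)·tanh(ẑ₀) )^{-1/2}. -/

import Mathlib

open MeasureTheory Real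

/-!
For each `κ` the harmonic function `cosh κx₀ cos κx₁ + cos κx₀ cosh κx₁` has no flux through the
hypotenuse and the leg `x₁ = 0`, so by Green's formula pairing `∇w` with its gradient sees only the
trace of `w` on the leg `x₀ = h`. With `κ = κₖ = π(k+1)/h` and a suitable scaling this gives fields
`vₖ` such that `⟪∇w, vₖ⟫` is the `k`-th cosine coefficient of the trace. Their Gram matrix is
`⟪vₖ, vₗ⟫ = δₖₗ h / (2 κₖ tanh κₖh) ± 1 / (κₖ² + κₗ²)`.

Schur's test bounds this matrix: if `tan z + tanh z = 0` and `0 < z < π`, then `m² / (m⁴ - z⁴)`,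
`m = π(k+1)`, is a positive eigenvector of the matrix of absolute values, with eigenvalue
`h² / (2 z tanh z)`, by the partial fraction expansions of `cot` and `coth`. The resulting
Bessel-type inequality bounds the cosine coefficients of the trace by `‖∇w‖`, and Parseval's
identity turns this into the trace inequality. Equality holds for `κ = z/h`, whose normal
derivative on the leg `x₀ = h` is `(z/h) tanh z` times its trace.
-/

/-! ### Partial fractions and the Perron weight -/

theorem hasSum_one_div_sq_sub_sq_complex {z : ℂ} (hz : Complex.sin z ≠ 0) :
    HasSum (fun n : ℕ => 1 / ((π * (n + 1)) ^ 2 - z ^ 2))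
      ((1 - z / Complex.tan z) / (2 * z ^ 2)) := by
  have hpi : (π : ℂ) ≠ 0 := Complex.ofReal_ne_zero.2 pi_ne_zero
  have hz0 : z ≠ 0 := by rintro rfl; simp at hz
  have hmem : z / π ∈ Complex.integerComplement := by
    rintro ⟨n, hn⟩
    exact hz (Complex.sin_eq_zero_iff.2 ⟨n, by rw [hn, div_mul_cancel₀ z hpi]⟩)
  have hcot : HasSum (cotTerm (z / π)) (π * Complex.cot z - π / z) := by
    have := cot_series_rep' hmem
    rw [mul_div_cancel₀ z hpi, one_div_div] at this
    exact this ▸ (summable_cotTerm hmem).hasSum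
  have hterm (n : ℕ) :
      1 / ((π * (n + 1)) ^ 2 - z ^ 2) = -(1 / (2 * π * z)) * cotTerm (z / π) n := by
    have hfac : (π * (n + 1)) ^ 2 - z ^ 2 = -(π ^ 2 * ((z / π + (n + 1)) * (z / π - (n + 1)))) := by
      field_simp
      ring
    rw [cotTerm_identity hmem, hfac]
    field_simp
  convert! hcot.mul_left (-(1 / (2 * π * z))) using 1
  · exact funext hterm
  · rw [← Complex.tan_inv_eq_cot]
    field_simp
    ring

theorem hasSum_one_div_sq_sub_sq {z : ℝ} (hz : sin z ≠ 0) :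
    HasSum (fun n : ℕ => 1 / ((π * (n + 1)) ^ 2 - z ^ 2)) ((1 - z / tan z) / (2 * z ^ 2)) := by
  have := hasSum_one_div_sq_sub_sq_complex (z := z) (by exact_mod_cast hz)
  exact_mod_cast this

theorem hasSum_one_div_sq_add_sq {z : ℝ} (hz : z ≠ 0) :
    HasSum (fun n : ℕ => 1 / ((π * (n + 1)) ^ 2 + z ^ 2)) ((z / tanh z - 1) / (2 * z ^ 2)) := by
  have hsin : Complex.sin (z * Complex.I) ≠ 0 := by
    rw [Complex.sin_mul_I, ← Complex.ofReal_sinh]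
    exact mul_ne_zero (Complex.ofReal_ne_zero.2 (sinh_ne_zero.2 hz)) Complex.I_ne_zero
  have := hasSum_one_div_sq_sub_sq_complex hsin
  rw [Complex.tan_mul_I, mul_div_mul_right _ _ Complex.I_ne_zero, mul_pow, Complex.I_sq,
    mul_neg_one, mul_neg, div_neg, ← neg_div, neg_sub] at this
  simp only [sub_neg_eq_add] at this
  exact_mod_cast this

theorem tanh_ne_zero {x : ℝ} (hx : x ≠ 0) : tanh x ≠ 0 :=
  tanh_zero ▸ tanh_injective.ne hx

theorem tanh_pos {x : ℝ} (hx : 0 < x) : 0 < tanh x := by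
  rw [tanh_eq_sinh_div_cosh]
  exact div_pos (sinh_pos_iff.2 hx) (cosh_pos x)

/-- The weight `m² / (m⁴ - z⁴)`. When `tan z + tanh z = 0`, its values at `m = π, 2π, …` are, up to
signs and a common factor, the cosine coefficients of the extremal trace. -/
noncomputable def perronWeight (z m : ℝ) : ℝ := m ^ 2 / (m ^ 4 - z ^ 4)

theorem perronWeight_pos {z m : ℝ} (hz : z ^ 4 < m ^ 4) : 0 < perronWeight z m := by
  have hm : m ≠ 0 := by
    rintro rfl
    exact hz.not_ge (by rw [zero_pow four_ne_zero]; positivity)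
  exact div_pos (by positivity) (sub_pos.2 hz)

theorem pow_four_lt_pi_mul_pow_four {z : ℝ} (hz : |z| < π) (n : ℕ) :
    z ^ 4 < (π * (n + 1)) ^ 4 := by
  rw [← Even.pow_abs (by decide : Even 4) z]
  gcongr
  nlinarith [pi_pos, (n.cast_nonneg : (0 : ℝ) ≤ n)]

theorem perronWeight_div_sq_add_sq {z m s : ℝ} (hm : m ^ 4 ≠ z ^ 4) (hs : s ^ 4 ≠ z ^ 4)
    (hms : m ^ 2 + s ^ 2 ≠ 0) :
    perronWeight z s / (m ^ 2 + s ^ 2) =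
      1 / (2 * (m ^ 2 + z ^ 2)) * (1 / (s ^ 2 - z ^ 2)) +
        1 / (2 * (m ^ 2 - z ^ 2)) * (1 / (s ^ 2 + z ^ 2)) -
        perronWeight z m * (1 / (s ^ 2 + m ^ 2)) := by
  have factor (r : ℝ) : r ^ 4 - z ^ 4 = (r ^ 2 - z ^ 2) * (r ^ 2 + z ^ 2) := by ring
  obtain ⟨hm₁, hm₂⟩ := mul_ne_zero_iff.1 (factor m ▸ sub_ne_zero.2 hm)
  obtain ⟨hs₁, hs₂⟩ := mul_ne_zero_iff.1 (factor s ▸ sub_ne_zero.2 hs)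
  rw [perronWeight, perronWeight, factor, factor, add_comm (s ^ 2) (m ^ 2)]
  field_simp
  ring

theorem hasSum_perronWeight_div_sq_add_sq {z m : ℝ} (hz : z ≠ 0)
    (htan : tan z + tanh z = 0) (hm : m ≠ 0) (hmz : m ^ 4 ≠ z ^ 4) :
    HasSum (fun n : ℕ => perronWeight z (π * (n + 1)) / (m ^ 2 + (π * (n + 1)) ^ 2))
      (perronWeight z m * (1 / (2 * z * tanh z) - 1 / (2 * m * tanh m))) := by
  have hsin : sin z ≠ 0 := fun h => tanh_ne_zero hz <| by
    rwa [tan_eq_sin_div_cos, h, zero_div, zero_add] at htan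
  have hs (n : ℕ) : (π * (n + 1)) ^ 4 ≠ z ^ 4 := by
    intro h
    rcases (pow_eq_pow_iff_of_ne_zero four_ne_zero).1 h with h | ⟨h, -⟩
    · exact hsin (sin_eq_zero_iff.2 ⟨n + 1, by push_cast; linarith⟩)
    · exact hsin (sin_eq_zero_iff.2 ⟨-(n + 1), by push_cast; linarith⟩)
  have hsum := (((hasSum_one_div_sq_sub_sq hsin).mul_left (1 / (2 * (m ^ 2 + z ^ 2)))).add
    ((hasSum_one_div_sq_add_sq hz).mul_left (1 / (2 * (m ^ 2 - z ^ 2))))).sub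
    ((hasSum_one_div_sq_add_sq hm).mul_left (perronWeight z m))
  convert! hsum using 1
  · exact funext fun n => perronWeight_div_sq_add_sq hmz (hs n) (by positivity)
  · have factor : m ^ 4 - z ^ 4 = (m ^ 2 - z ^ 2) * (m ^ 2 + z ^ 2) := by ring
    obtain ⟨hm₁, hm₂⟩ := mul_ne_zero_iff.1 (factor ▸ sub_ne_zero.2 hmz)
    have hth := tanh_ne_zero hz
    have hthm := tanh_ne_zero hm
    rw [eq_neg_of_add_eq_zero_left htan, perronWeight, factor]
    field_simp
    ring

/-! ### Schur's test -/

theorem sum_sum_mul_le_of_schur {ι 𝕜 : Type*} [Field 𝕜] [LinearOrder 𝕜] [IsStrictOrderedRing 𝕜]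
    {s : Finset ι} {K : ι → ι → 𝕜} {p : ι → 𝕜} {C : 𝕜} (a : ι → 𝕜)
    (hK : ∀ k ∈ s, ∀ l ∈ s, 0 ≤ K k l) (hsymm : ∀ k ∈ s, ∀ l ∈ s, K k l = K l k)
    (hp : ∀ k ∈ s, 0 < p k) (hrow : ∀ k ∈ s, ∑ l ∈ s, K k l * p l ≤ C * p k) :
    ∑ k ∈ s, ∑ l ∈ s, K k l * (a k * a l) ≤ C * ∑ k ∈ s, a k ^ 2 := by
  set T := ∑ k ∈ s, ∑ l ∈ s, K k l * p l * (a k ^ 2 / p k) with hT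
  have hT_le : T ≤ C * ∑ k ∈ s, a k ^ 2 := by
    rw [hT, Finset.mul_sum]
    refine Finset.sum_le_sum fun k hk => ?_
    have hpk := hp k hk
    calc ∑ l ∈ s, K k l * p l * (a k ^ 2 / p k)
        = (∑ l ∈ s, K k l * p l) * (a k ^ 2 / p k) := by rw [Finset.sum_mul]
      _ ≤ C * p k * (a k ^ 2 / p k) := by gcongr; exact hrow k hk
      _ = C * a k ^ 2 := by field_simp
  have hT_symm : T = ∑ k ∈ s, ∑ l ∈ s, K k l * p k * (a l ^ 2 / p l) := by
    rw [hT, Finset.sum_comm]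
    exact Finset.sum_congr rfl fun k hk => Finset.sum_congr rfl fun l hl => by
      rw [hsymm k hk l hl]
  have young : ∀ k ∈ s, ∀ l ∈ s,
      2 * (a k * a l) ≤ p l * (a k ^ 2 / p k) + p k * (a l ^ 2 / p l) := by
    intro k hk l hl
    have hpk := hp k hk
    have hpl := hp l hl
    have hsq : p l * (a k ^ 2 / p k) + p k * (a l ^ 2 / p l) - 2 * (a k * a l) =
        (p l * a k - p k * a l) ^ 2 / (p k * p l) := by
      field_simp
      ring
    exact sub_nonneg.1 (hsq ▸ by positivity)
  have hsum : 2 * ∑ k ∈ s, ∑ l ∈ s, K k l * (a k * a l) ≤ T + T := by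
    nth_rw 2 [hT_symm]
    simp only [hT, Finset.mul_sum, ← Finset.sum_add_distrib]
    refine Finset.sum_le_sum fun k hk => Finset.sum_le_sum fun l hl => ?_
    linarith [mul_le_mul_of_nonneg_left (young k hk l hl) (hK k hk l hl)]
  linarith

theorem sum_norm_inner_sq_le_of_schur {ι 𝕜 H : Type*} [RCLike 𝕜] [NormedAddCommGroup H]
    [InnerProductSpace 𝕜 H] {s : Finset ι} {v : ι → H} {p : ι → ℝ} {C : ℝ} (u : H) (hC : 0 ≤ C)
    (hp : ∀ k ∈ s, 0 < p k)
    (hrow : ∀ k ∈ s, ∑ l ∈ s, ‖inner 𝕜 (v k) (v l)‖ * p l ≤ C * p k) :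
    ∑ k ∈ s, ‖inner 𝕜 (v k) u‖ ^ 2 ≤ C * ‖u‖ ^ 2 := by
  set S := ∑ k ∈ s, ‖inner 𝕜 (v k) u‖ ^ 2 with hS
  set y := ∑ k ∈ s, inner 𝕜 (v k) u • v k with hy
  have hS_nonneg : 0 ≤ S := Finset.sum_nonneg fun _ _ => sq_nonneg _
  have hyu : inner 𝕜 y u = (S : 𝕜) := by
    simp only [hy, hS, sum_inner, inner_smul_left, RCLike.conj_mul, RCLike.ofReal_sum,
      RCLike.ofReal_pow]
  have hyy : ‖y‖ ^ 2 ≤ C * S := by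
    calc ‖y‖ ^ 2 = ‖inner 𝕜 y y‖ := by
          rw [inner_self_eq_norm_sq_to_K, norm_pow, RCLike.norm_ofReal, abs_norm]
      _ = ‖∑ k ∈ s, ∑ l ∈ s, inner 𝕜 (inner 𝕜 (v k) u • v k) (inner 𝕜 (v l) u • v l)‖ := by
          simp_rw [← inner_sum, ← sum_inner, hy]
      _ ≤ ∑ k ∈ s, ∑ l ∈ s, ‖inner 𝕜 (v k) (v l)‖ *
            (‖inner 𝕜 (v k) u‖ * ‖inner 𝕜 (v l) u‖) := by
          refine norm_sum_le_of_le _ fun k _ => norm_sum_le_of_le _ fun l _ => le_of_eq ?_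
          rw [inner_smul_left, inner_smul_right, norm_mul, norm_mul, RCLike.norm_conj]
          ring
      _ ≤ C * S := sum_sum_mul_le_of_schur _ (fun _ _ _ _ => norm_nonneg _)
          (fun k _ l _ => norm_inner_symm _ _) hp hrow
  have hSle : S ≤ ‖y‖ * ‖u‖ := by
    simpa [hyu, abs_of_nonneg hS_nonneg] using norm_inner_le_norm (𝕜 := 𝕜) y u
  rcases hS_nonneg.eq_or_lt with hS0 | hS_pos
  · rw [← hS0]
    positivity
  · refine le_of_mul_le_mul_left ?_ hS_pos
    calc S * S ≤ (‖y‖ * ‖u‖) * (‖y‖ * ‖u‖) := by gcongr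
      _ = ‖y‖ ^ 2 * ‖u‖ ^ 2 := by ring
      _ ≤ C * S * ‖u‖ ^ 2 := by gcongr
      _ = S * (C * ‖u‖ ^ 2) := by ring

theorem inner_memLp_toLp {α 𝕜 E : Type*} [RCLike 𝕜] [MeasurableSpace α] {μ : Measure α}
    [NormedAddCommGroup E] [InnerProductSpace 𝕜 E] {f g : α → E} (hf : MemLp f 2 μ)
    (hg : MemLp g 2 μ) : inner 𝕜 (hf.toLp f) (hg.toLp g) = ∫ x, inner 𝕜 (f x) (g x) ∂μ := by
  rw [L2.inner_def]
  refine integral_congr_ae ?_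
  filter_upwards [hf.coeFn_toLp, hg.coeFn_toLp] with x hfx hgx
  rw [hfx, hgx]

theorem sum_norm_integral_inner_sq_le_of_schur {ι α 𝕜 E : Type*} [RCLike 𝕜] [MeasurableSpace α]
    {μ : Measure α} [NormedAddCommGroup E] [InnerProductSpace 𝕜 E] {s : Finset ι}
    {v : ι → α → E} {u : α → E} {p : ι → ℝ} {C : ℝ} (hv : ∀ k, MemLp (v k) 2 μ)
    (hu : MemLp u 2 μ) (hC : 0 ≤ C) (hp : ∀ k ∈ s, 0 < p k)
    (hrow : ∀ k ∈ s, ∑ l ∈ s, ‖∫ x, inner 𝕜 (v k x) (v l x) ∂μ‖ * p l ≤ C * p k) :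
    ∑ k ∈ s, ‖∫ x, inner 𝕜 (v k x) (u x) ∂μ‖ ^ 2 ≤ C * ∫ x, ‖u x‖ ^ 2 ∂μ := by
  have hnorm : ‖hu.toLp u‖ ^ 2 = ∫ x, ‖u x‖ ^ 2 ∂μ := by
    have hinner := inner_memLp_toLp (𝕜 := 𝕜) hu hu
    simp only [inner_self_eq_norm_sq_to_K] at hinner
    exact_mod_cast hinner
  simpa only [inner_memLp_toLp, hnorm] using
    sum_norm_inner_sq_le_of_schur (𝕜 := 𝕜) (v := fun k => (hv k).toLp (v k)) (hu.toLp u) hC hp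
      (by simpa only [inner_memLp_toLp] using hrow)

/-! ### Parseval's identity for cosine coefficients -/

theorem measurePreserving_abs_restrict_Ioc {h : ℝ} (hh : 0 ≤ h) :
    MeasurePreserving (fun x : ℝ => |x|) (volume.restrict (Set.Ioc (-h) h))
      ((2 : ENNReal) • volume.restrict (Set.Ioc 0 h)) := by
  have hpos : (volume.restrict (Set.Ioc 0 h)).map (fun x : ℝ => |x|) =
      volume.restrict (Set.Ioc 0 h) := by
    have : (fun x : ℝ => |x|) =ᵐ[volume.restrict (Set.Ioc 0 h)] id :=
      (ae_restrict_mem measurableSet_Ioc).mono fun x hx => abs_of_pos hx.1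
    rw [Measure.map_congr this, Measure.map_id]
  have hneg : (volume.restrict (Set.Ioc (-h) 0)).map (fun x : ℝ => |x|) =
      volume.restrict (Set.Ioc 0 h) := by
    have habs : (fun x : ℝ => |x|) =ᵐ[volume.restrict (Set.Ioc (-h) 0)] Neg.neg :=
      (ae_restrict_mem measurableSet_Ioc).mono fun x hx => abs_of_nonpos hx.2
    have hmap := ((Measure.measurePreserving_neg (volume : Measure ℝ)).restrict_preimage
      (measurableSet_Ico (a := (0 : ℝ)) (b := h))).map_eq
    rwa [Set.neg_preimage, Set.neg_Ico, neg_zero, ← Measure.map_congr habs,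
      restrict_Ico_eq_restrict_Ioc] at hmap
  refine ⟨by fun_prop, ?_⟩
  rw [← Set.Ioc_union_Ioc_eq_Ioc (neg_nonpos.2 hh) hh, Measure.restrict_union
    (Set.Ioc_disjoint_Ioc_of_le le_rfl) measurableSet_Ioc, Measure.map_add _ _ (by fun_prop),
    hpos, hneg, two_smul]

theorem intervalIntegral_comp_abs {E : Type*} [NormedAddCommGroup E] [NormedSpace ℝ E] {h : ℝ}
    (hh : 0 ≤ h) {f : ℝ → E} (hf : AEStronglyMeasurable f (volume.restrict (Set.Ioc 0 h))) :
    ∫ x in -h..h, f |x| = (2 : ℝ) • ∫ t in 0..h, f t := by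
  have habs := measurePreserving_abs_restrict_Ioc hh
  rw [intervalIntegral.integral_of_le (by linarith), intervalIntegral.integral_of_le hh,
    ← integral_map habs.aemeasurable (habs.map_eq ▸ hf.smul_measure _), habs.map_eq,
    integral_smul_measure, ENNReal.toReal_ofNat]

theorem integral_exp_mul_comp_abs {h : ℝ} (hh : 0 ≤ h) {g : ℝ → ℝ}
    (hg : IntervalIntegrable g volume 0 h) (θ : ℝ) :
    ∫ x in -h..h, Complex.exp (θ * x * Complex.I) * g |x| =
      2 * (∫ t in 0..h, g t * cos (θ * t) : ℝ) := by
  have hint : IntervalIntegrable (fun x => (g |x| : ℂ)) volume (-h) h := by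
    rw [intervalIntegrable_iff_integrableOn_Ioc_of_le (by linarith)] at hg ⊢
    exact ((measurePreserving_abs_restrict_Ioc hh).integrable_comp_of_integrable
      (hg.smul_measure ENNReal.ofNat_ne_top)).ofReal
  have hreflect : ∫ x in -h..h, Complex.exp (-(θ * x) * Complex.I) * g |x| =
      ∫ x in -h..h, Complex.exp (θ * x * Complex.I) * g |x| := by
    simpa using intervalIntegral.integral_comp_neg
      (a := -h) (b := h) (fun x => Complex.exp (θ * x * Complex.I) * g |x|)
  have hcos (x : ℝ) : Complex.exp (θ * x * Complex.I) * g |x| +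
      Complex.exp (-(θ * x) * Complex.I) * g |x| = 2 * (g |x| * cos (θ * |x|) : ℝ) := by
    rw [← cos_abs (θ * |x|), abs_mul, abs_abs, ← abs_mul, cos_abs]
    push_cast
    rw [Complex.cos]
    ring
  have hsum : ∫ x in -h..h, Complex.exp (θ * x * Complex.I) * g |x| =
      ∫ x in -h..h, ((g |x| * cos (θ * |x|) : ℝ) : ℂ) := by
    refine mul_left_cancel₀ (two_ne_zero (α := ℂ)) ?_
    rw [two_mul]
    nth_rw 2 [← hreflect]
    rw [← intervalIntegral.integral_add (hint.continuousOn_mul (by fun_prop))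
      (hint.continuousOn_mul (by fun_prop))]
    simp_rw [hcos]
    exact intervalIntegral.integral_const_mul _ _
  rw [hsum, intervalIntegral.integral_ofReal,
    intervalIntegral_comp_abs (f := fun t => g t * cos (θ * t)) hh
      (hg.mul_continuousOn (by fun_prop)).aestronglyMeasurable, smul_eq_mul,
    Complex.ofReal_mul, Complex.ofReal_ofNat]

theorem fourierCoeffOn_comp_abs {h : ℝ} (hh : 0 < h) (hlt : -h < h) {g : ℝ → ℝ}
    (hg : IntervalIntegrable g volume 0 h) (n : ℤ) :
    fourierCoeffOn hlt (fun x => (g |x| : ℂ)) n =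
      (1 / h * ∫ t in 0..h, g t * cos (π * n / h * t) : ℝ) := by
  have hexp (x : ℝ) : fourier (-n) (x : AddCircle (h - -h)) • (g |x| : ℂ) =
      Complex.exp ((-(π * n / h) : ℝ) * x * Complex.I) * g |x| := by
    rw [fourier_coe_apply, smul_eq_mul]
    congr 2
    push_cast
    field_simp
    ring
  simp_rw [fourierCoeffOn_eq_integral, hexp, integral_exp_mul_comp_abs hh.le hg, neg_mul,
    cos_neg, Complex.real_smul]
  push_cast
  field_simp
  ring

theorem hasSum_sq_integral_mul_cos {h : ℝ} (hh : 0 < h) {g : ℝ → ℝ}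
    (hg : MemLp g 2 (volume.restrict (Set.Ioc 0 h))) :
    HasSum (fun k : ℕ => 2 / h * (∫ t in 0..h, g t * cos (π * (k + 1) / h * t)) ^ 2)
      ((∫ t in 0..h, g t ^ 2) - (∫ t in 0..h, g t) ^ 2 / h) := by
  have hlt : -h < h := by linarith
  have hint : IntervalIntegrable g volume 0 h :=
    (intervalIntegrable_iff_integrableOn_Ioc_of_le hh.le).2 (hg.integrable one_le_two)
  have hL2 : MemLp (fun x => (g |x| : ℂ)) 2 (volume.restrict (Set.Ioc (-h) h)) :=
    ((hg.smul_measure ENNReal.ofNat_ne_top).comp_measurePreserving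
      (measurePreserving_abs_restrict_Ioc hh.le)).ofReal
  have hnorm : ∫ x in -h..h, ‖(g |x| : ℂ)‖ ^ 2 = 2 * ∫ t in 0..h, g t ^ 2 := by
    simp_rw [Complex.norm_real, norm_eq_abs, sq_abs]
    exact intervalIntegral_comp_abs (f := fun t => g t ^ 2) hh.le (hg.1.pow 2)
  let a (n : ℤ) : ℝ := ∫ t in 0..h, g t * cos (π * n / h * t)
  have ha_zero : a 0 = ∫ t in 0..h, g t := by simp [a]
  have ha_neg (n : ℤ) : a (-n) = a n := by simp [a, neg_div]
  have hcoeff (n : ℤ) : ‖fourierCoeffOn hlt (fun x => (g |x| : ℂ)) n‖ ^ 2 = a n ^ 2 / h ^ 2 := by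
    rw [fourierCoeffOn_comp_abs hh hlt hint, Complex.norm_real, norm_eq_abs, sq_abs]
    ring
  have hsum := (hasSum_nat_add_iff' 1).2 (hasSum_sq_fourierCoeffOn hlt hL2).nat_add_neg
  simp only [hcoeff, hnorm, ha_neg, Finset.sum_range_one, Nat.cast_zero, ha_zero,
    smul_eq_mul] at hsum
  convert! hsum.mul_left h using 1
  · ext k
    simp only [a, Nat.cast_add, Nat.cast_one, Int.cast_add, Int.cast_natCast, Int.cast_one]
    field_simp
    ring
  · field_simp
    ring

/-! ### Green's formula on the triangle -/

local notation "ℝ²" => EuclideanSpace ℝ (Fin 2)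

theorem setIntegral_regionBetween {α V : Type*} [MeasurableSpace α] {μ : Measure α} [SFinite μ]
    [NormedAddCommGroup V] [NormedSpace ℝ V] {a b : α → ℝ} {s : Set α} (ha : Measurable a)
    (hb : Measurable b) (hs : MeasurableSet s) {f : α × ℝ → V}
    (hf : IntegrableOn f (regionBetween a b s) (μ.prod volume)) :
    ∫ p in regionBetween a b s, f p ∂μ.prod volume =
      ∫ x in s, (∫ y in Set.Ioo (a x) (b x), f (x, y)) ∂μ := by
  have hmeas := measurableSet_regionBetween ha hb hs
  have hslice (x : α) : ∫ y, (regionBetween a b s).indicator f (x, y) =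
      s.indicator (fun x => ∫ y in Set.Ioo (a x) (b x), f (x, y)) x := by
    by_cases hx : x ∈ s
    · rw [Set.indicator_of_mem hx, ← integral_indicator measurableSet_Ioo]
      congr! 2 with y
      simp [Set.indicator, regionBetween, hx]
    · rw [Set.indicator_of_notMem hx]
      simp [regionBetween, hx]
  rw [← integral_indicator hmeas, integral_prod _ ((integrable_indicator_iff hmeas).2 hf),
    ← integral_indicator hs]
  simp only [hslice]

theorem setIntegral_euclideanSpace_fin_two {V : Type*} [NormedAddCommGroup V] [NormedSpace ℝ V]
    (f : ℝ² → V) (s : Set (ℝ × ℝ)) :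
    ∫ x in {x : ℝ² | (x 0, x 1) ∈ s}, f x = ∫ p in s, f !₂[p.1, p.2] := by
  let e : ℝ² ≃ᵐ ℝ × ℝ :=
    (MeasurableEquiv.toLp 2 (Fin 2 → ℝ)).symm.trans MeasurableEquiv.finTwoArrow
  have he : MeasurePreserving e :=
    (volume_preserving_finTwoArrow ℝ).comp (PiLp.volume_preserving_ofLp (Fin 2))
  have hinv (x : ℝ²) : !₂[x 0, x 1] = x := by ext i; fin_cases i <;> rfl
  have := he.setIntegral_preimage_emb e.measurableEmbedding (fun p => f !₂[p.1, p.2]) s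
  rw [← this]
  exact integral_congr_ae (.of_forall fun x => congrArg f (hinv x).symm)

theorem memLp_restrict_of_isCompact {X V : Type*} [TopologicalSpace X]
    [MeasurableSpace X] [OpensMeasurableSpace X] [NormedAddCommGroup V]
    {μ : Measure X} [IsFiniteMeasureOnCompacts μ] {K : Set X}
    (hK : IsCompact K) (hmeas : MeasurableSet K) {f : X → V} (hf : ContinuousOn f K)
    (p : ENNReal) : MemLp f p (μ.restrict K) := by
  have : IsFiniteMeasure (μ.restrict K) := isFiniteMeasure_restrict.2 hK.measure_ne_top
  obtain ⟨C, hC⟩ := hK.exists_bound_of_continuousOn hf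
  exact .of_bound (hf.aestronglyMeasurable_of_isCompact hK hmeas) C
    ((ae_restrict_mem hmeas).mono hC)

/-- The isosceles right triangle `0 < x₁ < x₀ < h` with legs of length `h`. -/
def rightTriangle (h : ℝ) : Set ℝ² := {x | 0 < x 1 ∧ x 1 < x 0 ∧ x 0 < h}

theorem memLp_rightTriangle {V : Type*} [NormedAddCommGroup V] {h : ℝ} {f : ℝ² → V} (p : ENNReal)
    (hf : Continuous f) : MemLp f p (volume.restrict (rightTriangle h)) := by
  let K : Set ℝ² := WithLp.toLp 2 '' Set.Icc 0 fun _ => h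
  have hK : IsCompact K := isCompact_Icc.image (PiLp.continuous_toLp 2 _)
  have hsub : rightTriangle h ⊆ K := fun x ⟨h₁, h₂, h₃⟩ =>
    ⟨x.ofLp, ⟨Fin.forall_fin_two.2 ⟨(h₁.trans h₂).le, h₁.le⟩,
      Fin.forall_fin_two.2 ⟨h₃.le, (h₂.trans h₃).le⟩⟩, rfl⟩
  exact (memLp_restrict_of_isCompact hK hK.measurableSet hf.continuousOn p).mono_measure
    (Measure.restrict_mono hsub le_rfl)

section RightTriangle

variable {V : Type*} [NormedAddCommGroup V] [NormedSpace ℝ V] {h : ℝ} {f : ℝ² → V}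

theorem setIntegral_rightTriangle (hh : 0 ≤ h) (hf : Continuous f) :
    ∫ x in rightTriangle h, f x = ∫ x in 0..h, ∫ y in 0..x, f !₂[x, y] := by
  have hset : rightTriangle h =
      {x | (x 0, x 1) ∈ regionBetween (fun _ => 0) id (Set.Ioo 0 h)} := by
    ext x
    simp only [rightTriangle, regionBetween, Set.mem_ofPred_eq, Set.mem_Ioo, id]
    grind
  have hint : IntegrableOn (fun p : ℝ × ℝ => f !₂[p.1, p.2])
      (regionBetween (fun _ => 0) id (Set.Ioo 0 h)) :=
    (Continuous.integrableOn_Icc (a := 0) (b := (h, h)) (by fun_prop)).mono_set fun p hp =>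
      ⟨⟨hp.1.1.le, hp.2.1.le⟩, ⟨hp.1.2.le, (hp.2.2.trans hp.1.2).le⟩⟩
  rw [hset, setIntegral_euclideanSpace_fin_two, Measure.volume_eq_prod,
    setIntegral_regionBetween measurable_const measurable_id measurableSet_Ioo hint,
    intervalIntegral.integral_of_le hh, integral_Ioc_eq_integral_Ioo]
  refine setIntegral_congr_fun measurableSet_Ioo fun x hx => ?_
  rw [intervalIntegral.integral_of_le hx.1.le, integral_Ioc_eq_integral_Ioo, id]

theorem setIntegral_rightTriangle_symm (hh : 0 ≤ h) (hf : Continuous f) :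
    ∫ x in rightTriangle h, f x = ∫ y in 0..h, ∫ x in y..h, f !₂[x, y] := by
  have hset : rightTriangle h =
      {x | (x 0, x 1) ∈ Prod.swap ⁻¹' regionBetween id (fun _ => h) (Set.Ioo 0 h)} := by
    ext x
    simp only [rightTriangle, regionBetween, Set.mem_ofPred_eq, Set.mem_Ioo, id,
      Set.mem_preimage, Prod.swap]
    grind
  have hint : IntegrableOn (fun p : ℝ × ℝ => f !₂[p.2, p.1])
      (regionBetween id (fun _ => h) (Set.Ioo 0 h)) :=
    (Continuous.integrableOn_Icc (a := 0) (b := (h, h)) (by fun_prop)).mono_set fun p hp =>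
      ⟨⟨hp.1.1.le, (hp.1.1.trans hp.2.1).le⟩, ⟨hp.1.2.le, hp.2.2.le⟩⟩
  have hswap := (Measure.measurePreserving_swap (μ := (volume : Measure ℝ)) (ν := volume))
    |>.setIntegral_preimage_emb MeasurableEquiv.prodComm.measurableEmbedding
      (fun p => f !₂[p.2, p.1]) (regionBetween id (fun _ => h) (Set.Ioo 0 h))
  simp only [Prod.fst_swap, Prod.snd_swap] at hswap
  rw [hset, setIntegral_euclideanSpace_fin_two, Measure.volume_eq_prod, hswap,
    setIntegral_regionBetween measurable_id measurable_const measurableSet_Ioo hint,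
    intervalIntegral.integral_of_le hh, integral_Ioc_eq_integral_Ioo]
  refine setIntegral_congr_fun measurableSet_Ioo fun y hy => ?_
  rw [intervalIntegral.integral_of_le hy.2.le, integral_Ioc_eq_integral_Ioo, id]

theorem hasDerivAt_comp_fst {x y : ℝ} (hf : DifferentiableAt ℝ f !₂[x, y]) :
    HasDerivAt (fun s => f !₂[s, y]) (fderiv ℝ f !₂[x, y] !₂[1, 0]) x := by
  have hline : HasDerivAt (fun s : ℝ => !₂[s, y]) !₂[1, 0] x := by
    convert! ((hasDerivAt_id x).smul_const !₂[(1 : ℝ), 0]).add_const !₂[0, y] using 1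
    · ext s i; fin_cases i <;> simp
    · simp
  exact hf.hasFDerivAt.comp_hasDerivAt x hline

theorem hasDerivAt_comp_snd {x y : ℝ} (hf : DifferentiableAt ℝ f !₂[x, y]) :
    HasDerivAt (fun s => f !₂[x, s]) (fderiv ℝ f !₂[x, y] !₂[0, 1]) y := by
  have hline : HasDerivAt (fun s : ℝ => !₂[x, s]) !₂[0, 1] y := by
    convert! ((hasDerivAt_id y).smul_const !₂[(0 : ℝ), 1]).add_const !₂[x, 0] using 1
    · ext s i; fin_cases i <;> simp
    · simp
  exact hf.hasFDerivAt.comp_hasDerivAt y hline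

theorem setIntegral_rightTriangle_fderiv_fst [CompleteSpace V] (hh : 0 ≤ h) (hf : ContDiff ℝ 1 f) :
    ∫ x in rightTriangle h, fderiv ℝ f x !₂[1, 0] =
      (∫ t in 0..h, f !₂[h, t]) - ∫ t in 0..h, f !₂[t, t] := by
  have hf' : Continuous fun x => fderiv ℝ f x !₂[1, 0] := by fun_prop
  have hcont := hf.continuous
  rw [setIntegral_rightTriangle_symm hh hf', ← intervalIntegral.integral_sub
    (Continuous.intervalIntegrable (by fun_prop) _ _)
    (Continuous.intervalIntegrable (by fun_prop) _ _)]
  refine intervalIntegral.integral_congr fun y _ => ?_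
  exact intervalIntegral.integral_eq_sub_of_hasDerivAt
      (fun x _ => hasDerivAt_comp_fst (hf.differentiable one_ne_zero _))
      (Continuous.intervalIntegrable (by fun_prop) _ _)

theorem setIntegral_rightTriangle_fderiv_snd [CompleteSpace V] (hh : 0 ≤ h) (hf : ContDiff ℝ 1 f) :
    ∫ x in rightTriangle h, fderiv ℝ f x !₂[0, 1] =
      (∫ t in 0..h, f !₂[t, t]) - ∫ t in 0..h, f !₂[t, 0] := by
  have hf' : Continuous fun x => fderiv ℝ f x !₂[0, 1] := by fun_prop
  have hcont := hf.continuous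
  rw [setIntegral_rightTriangle hh hf', ← intervalIntegral.integral_sub
    (Continuous.intervalIntegrable (by fun_prop) _ _)
    (Continuous.intervalIntegrable (by fun_prop) _ _)]
  refine intervalIntegral.integral_congr fun x _ => ?_
  exact intervalIntegral.integral_eq_sub_of_hasDerivAt
      (fun y _ => hasDerivAt_comp_snd (hf.differentiable one_ne_zero _))
      (Continuous.intervalIntegrable (by fun_prop) _ _)

end RightTriangle

theorem setIntegral_inner_gradient_rightTriangle {h : ℝ} (hh : 0 ≤ h) {w : ℝ² → ℝ} {Φ : ℝ² → ℝ²}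
    (hw : ContDiff ℝ 1 w) (hΦ : ContDiff ℝ 1 Φ)
    (hdiv : ∀ x, fderiv ℝ (fun x => Φ x 0) x !₂[1, 0] + fderiv ℝ (fun x => Φ x 1) x !₂[0, 1] = 0)
    (hbase : ∀ t, Φ !₂[t, 0] 1 = 0) (hdiag : ∀ t, Φ !₂[t, t] 0 = Φ !₂[t, t] 1) :
    ∫ x in rightTriangle h, inner ℝ (gradient w x) (Φ x) =
      ∫ t in 0..h, w !₂[h, t] * Φ !₂[h, t] 0 := by
  have hpt (x : ℝ²) : inner ℝ (gradient w x) (Φ x) =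
      fderiv ℝ (fun x => w x * Φ x 0) x !₂[1, 0] + fderiv ℝ (fun x => w x * Φ x 1) x !₂[0, 1] := by
    have hdecomp : Φ x = Φ x 0 • !₂[1, 0] + Φ x 1 • !₂[0, 1] := by
      ext i; fin_cases i <;> simp
    have hwx := hw.differentiable one_ne_zero x
    have hΦx := hΦ.differentiable one_ne_zero x
    rw [inner_gradient_left, hdecomp, map_add, map_smul, map_smul,
      fderiv_fun_mul hwx (by fun_prop), fderiv_fun_mul hwx (by fun_prop)]
    simp only [add_apply, smul_apply, smul_eq_mul]
    linear_combination -w x * hdiv x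
  simp_rw [hpt]
  rw [integral_add (memLp_one_iff_integrable.1 (memLp_rightTriangle 1 (by fun_prop)))
      (memLp_one_iff_integrable.1 (memLp_rightTriangle 1 (by fun_prop))),
    setIntegral_rightTriangle_fderiv_fst hh (by fun_prop),
    setIntegral_rightTriangle_fderiv_snd hh (by fun_prop)]
  simp [hbase, hdiag]

/-! ### Harmonic modes -/

section Modes

/-- The harmonic function `cosh (κ x₀) cos (κ x₁) + cos (κ x₀) cosh (κ x₁)`. It is symmetric in
`x₀, x₁` and even in `x₁`, hence has zero normal derivative on the lines `x₁ = x₀` and `x₁ = 0`. -/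
noncomputable def mode (κ : ℝ) (x : ℝ²) : ℝ :=
  cosh (κ * x 0) * cos (κ * x 1) + cos (κ * x 0) * cosh (κ * x 1)

/-- The vector field `κ⁻¹ • ∇ (mode κ)`, in a form that makes sense for `κ = 0` too. -/
noncomputable def modeField (κ : ℝ) (x : ℝ²) : ℝ² :=
  !₂[sinh (κ * x 0) * cos (κ * x 1) - sin (κ * x 0) * cosh (κ * x 1),
    cos (κ * x 0) * sinh (κ * x 1) - cosh (κ * x 0) * sin (κ * x 1)]

theorem contDiff_mode (κ : ℝ) {n : WithTop ℕ∞} : ContDiff ℝ n (mode κ) := by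
  unfold mode
  fun_prop

theorem contDiff_modeField (κ : ℝ) {n : WithTop ℕ∞} : ContDiff ℝ n (modeField κ) := by
  refine contDiff_euclidean.2 (Fin.forall_fin_two.2 ⟨?_, ?_⟩) <;>
  · simp only [modeField, Matrix.cons_val_zero, Matrix.cons_val_one]
    fun_prop

theorem hasFDerivAt_mul_coord {a b : ℝ → ℝ} {a' b' : ℝ} {x : ℝ²} (ha : HasDerivAt a a' (x 0))
    (hb : HasDerivAt b b' (x 1)) :
    HasFDerivAt (fun x : ℝ² => a (x 0) * b (x 1))
      ((a' * b (x 1)) • EuclideanSpace.proj (𝕜 := ℝ) (0 : Fin 2) +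
        (a (x 0) * b') • EuclideanSpace.proj (1 : Fin 2)) x := by
  have h₀ := ha.comp_hasFDerivAt x (EuclideanSpace.proj (𝕜 := ℝ) (0 : Fin 2)).hasFDerivAt
  have h₁ := hb.comp_hasFDerivAt x (EuclideanSpace.proj (𝕜 := ℝ) (1 : Fin 2)).hasFDerivAt
  convert! h₀.mul h₁ using 1
  ext v
  simp
  ring

theorem gradient_mode (κ : ℝ) (x : ℝ²) : gradient (mode κ) x = κ • modeField κ x := by
  have hlin (y : ℝ) : HasDerivAt (fun y => κ * y) κ y := hasDerivAt_const_mul κ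
  have hd := (hasFDerivAt_mul_coord (hlin (x 0)).cosh (hlin (x 1)).cos).add
    (hasFDerivAt_mul_coord (hlin (x 0)).cos (hlin (x 1)).cosh)
  refine ext_inner_right ℝ fun v => ?_
  have : fderiv ℝ (mode κ) x = _ := hd.fderiv
  rw [inner_gradient_left, this]
  simp [modeField, inner_smul_left, PiLp.inner_apply, Fin.sum_univ_two]
  ring

theorem div_modeField (κ : ℝ) (x : ℝ²) :
    fderiv ℝ (fun x => modeField κ x 0) x !₂[1, 0] +
      fderiv ℝ (fun x => modeField κ x 1) x !₂[0, 1] = 0 := by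
  have hlin (y : ℝ) : HasDerivAt (fun y => κ * y) κ y := hasDerivAt_const_mul κ
  have h₀ := (hasFDerivAt_mul_coord (hlin (x 0)).sinh (hlin (x 1)).cos).sub
    (hasFDerivAt_mul_coord (hlin (x 0)).sin (hlin (x 1)).cosh)
  have h₁ := (hasFDerivAt_mul_coord (hlin (x 0)).cos (hlin (x 1)).sinh).sub
    (hasFDerivAt_mul_coord (hlin (x 0)).cosh (hlin (x 1)).sin)
  have hf₀ : fderiv ℝ (fun x => modeField κ x 0) x = _ := h₀.fderiv
  have hf₁ : fderiv ℝ (fun x => modeField κ x 1) x = _ := h₁.fderiv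
  rw [hf₀, hf₁]
  simp
  ring

theorem setIntegral_inner_gradient_modeField {h : ℝ} (hh : 0 ≤ h) {w : ℝ² → ℝ}
    (hw : ContDiff ℝ 1 w) (κ : ℝ) :
    ∫ x in rightTriangle h, inner ℝ (gradient w x) (modeField κ x) =
      ∫ t in 0..h, w !₂[h, t] * modeField κ !₂[h, t] 0 :=
  setIntegral_inner_gradient_rightTriangle hh hw (contDiff_modeField κ) (div_modeField κ)
    (fun t => by simp [modeField]) (fun t => by simp [modeField, mul_comm])

end Modes

/-! ### The Gram matrix of the cosine modes -/

section CosineIntegrals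

variable {a b h : ℝ}

theorem integral_cosh_mul_cos (hab : a ^ 2 + b ^ 2 ≠ 0) :
    ∫ t in 0..h, cosh (a * t) * cos (b * t) =
      (a * sinh (a * h) * cos (b * h) + b * cosh (a * h) * sin (b * h)) / (a ^ 2 + b ^ 2) := by
  have hderiv (t : ℝ) : HasDerivAt
      (fun t => (a * (sinh (a * t) * cos (b * t)) + b * (cosh (a * t) * sin (b * t))) /
        (a ^ 2 + b ^ 2)) (cosh (a * t) * cos (b * t)) t := by
    have ha : HasDerivAt (fun t => a * t) a t := hasDerivAt_const_mul a
    have hb : HasDerivAt (fun t => b * t) b t := hasDerivAt_const_mul b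
    refine ((((ha.sinh.mul hb.cos).const_mul a).add
      ((ha.cosh.mul hb.sin).const_mul b)).div_const (a ^ 2 + b ^ 2)).congr_deriv ?_
    field_simp
    ring
  rw [intervalIntegral.integral_eq_sub_of_hasDerivAt (fun t _ => hderiv t)
    (Continuous.intervalIntegrable (by fun_prop) _ _)]
  simp [mul_assoc]

theorem integral_cos_mul_cos (hab : a ^ 2 ≠ b ^ 2) :
    ∫ t in 0..h, cos (a * t) * cos (b * t) =
      (a * sin (a * h) * cos (b * h) - b * cos (a * h) * sin (b * h)) / (a ^ 2 - b ^ 2) := by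
  have hab' : a ^ 2 - b ^ 2 ≠ 0 := sub_ne_zero.2 hab
  have hderiv (t : ℝ) : HasDerivAt
      (fun t => (a * (sin (a * t) * cos (b * t)) - b * (cos (a * t) * sin (b * t))) /
        (a ^ 2 - b ^ 2)) (cos (a * t) * cos (b * t)) t := by
    have ha : HasDerivAt (fun t => a * t) a t := hasDerivAt_const_mul a
    have hb : HasDerivAt (fun t => b * t) b t := hasDerivAt_const_mul b
    refine ((((ha.sin.mul hb.cos).const_mul a).sub
      ((ha.cos.mul hb.sin).const_mul b)).div_const (a ^ 2 - b ^ 2)).congr_deriv ?_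
    field_simp
    ring
  rw [intervalIntegral.integral_eq_sub_of_hasDerivAt (fun t _ => hderiv t)
    (Continuous.intervalIntegrable (by fun_prop) _ _)]
  simp [mul_assoc]

theorem integral_cos_mul_self (ha : a ≠ 0) :
    ∫ t in 0..h, cos (a * t) * cos (a * t) =
      h / 2 + sin (a * h) * cos (a * h) / (2 * a) := by
  simp_rw [← sq]
  rw [intervalIntegral.integral_comp_mul_left (fun t => cos t ^ 2) ha, integral_cos_sq]
  simp
  field_simp
  ring

end CosineIntegrals

section CosineModes

/-- The frequency `π (k + 1) / h` of the `k`-th nonconstant cosine of the Neumann basis of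
`[0, h]`. -/
noncomputable def cosFreq (h : ℝ) (k : ℕ) : ℝ := π * (k + 1) / h

variable {h : ℝ}

theorem cosFreq_pos (hh : 0 < h) (k : ℕ) : 0 < cosFreq h k := by
  unfold cosFreq
  positivity

theorem cosFreq_mul (hh : h ≠ 0) (k : ℕ) : cosFreq h k * h = π * (k + 1) :=
  div_mul_cancel₀ _ hh

theorem sin_cosFreq_mul (hh : h ≠ 0) (k : ℕ) : sin (cosFreq h k * h) = 0 := by
  rw [cosFreq_mul hh, mul_comm]
  exact_mod_cast sin_nat_mul_pi (k + 1)

theorem cosFreq_injective (hh : h ≠ 0) : Function.Injective (cosFreq h) := fun k l hkl => by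
  have := congrArg (· * h) hkl
  simpa [cosFreq_mul hh, pi_ne_zero] using this

theorem integral_cos_cosFreq_mul_cos_cosFreq (hh : 0 < h) (k l : ℕ) :
    ∫ t in 0..h, cos (cosFreq h k * t) * cos (cosFreq h l * t) = if k = l then h / 2 else 0 := by
  split_ifs with hkl
  · rw [hkl, integral_cos_mul_self (cosFreq_pos hh l).ne', sin_cosFreq_mul hh.ne']
    simp
  · have hsq : cosFreq h k ^ 2 ≠ cosFreq h l ^ 2 := fun hsq => hkl <| cosFreq_injective hh.ne' <|
      (sq_eq_sq₀ (cosFreq_pos hh k).le (cosFreq_pos hh l).le).1 hsq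
    rw [integral_cos_mul_cos hsq, sin_cosFreq_mul hh.ne', sin_cosFreq_mul hh.ne']
    simp

/-- `modeField κ`, scaled so that for `sin (κ h) = 0` its flux through the leg `x₀ = h` is
`cos (κ x₁)`. -/
noncomputable def fluxField (h κ : ℝ) (x : ℝ²) : ℝ² := (sinh (κ * h))⁻¹ • modeField κ x

variable {κ μ : ℝ}

theorem continuous_fluxField (κ : ℝ) : Continuous (fluxField h κ) :=
  (contDiff_modeField κ (n := 0)).continuous.const_smul (sinh (κ * h))⁻¹

theorem fluxField_leg (hκh : κ * h ≠ 0) (hsin : sin (κ * h) = 0) (t : ℝ) :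
    fluxField h κ !₂[h, t] 0 = cos (κ * t) := by
  have := sinh_ne_zero.2 hκh
  simp [fluxField, modeField, hsin, this]

theorem setIntegral_inner_gradient_fluxField (hh : 0 < h) (hκ : κ ≠ 0) (hsin : sin (κ * h) = 0)
    {w : ℝ² → ℝ} (hw : ContDiff ℝ 1 w) :
    ∫ x in rightTriangle h, inner ℝ (fluxField h κ x) (gradient w x) =
      ∫ t in 0..h, w !₂[h, t] * cos (κ * t) := by
  have hleg := fluxField_leg (mul_ne_zero hκ hh.ne') hsin
  simp only [fluxField, PiLp.smul_apply, smul_eq_mul] at hleg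
  simp_rw [← hleg, fluxField, real_inner_comm, inner_smul_right, mul_left_comm (w _)]
  rw [integral_const_mul, setIntegral_inner_gradient_modeField hh.le hw,
    intervalIntegral.integral_const_mul]

theorem setIntegral_inner_fluxField (hh : 0 < h) (hκ : κ ≠ 0) (hμ : μ ≠ 0)
    (hsin : sin (μ * h) = 0) :
    ∫ x in rightTriangle h, inner ℝ (fluxField h κ x) (fluxField h μ x) =
      (∫ t in 0..h, cos (κ * t) * cos (μ * t)) / (κ * tanh (κ * h)) +
        cos (κ * h) * cos (μ * h) / (κ ^ 2 + μ ^ 2) := by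
  have hs := sinh_ne_zero.2 (mul_ne_zero hκ hh.ne')
  have hflux (x : ℝ²) : fluxField h κ x = (κ * sinh (κ * h))⁻¹ • gradient (mode κ) x := by
    rw [gradient_mode, smul_smul, fluxField]
    congr 1
    field_simp
  have htrace (t : ℝ) : mode κ !₂[h, t] * cos (μ * t) =
      cosh (κ * h) * (cos (κ * t) * cos (μ * t)) +
        cos (κ * h) * (cosh (κ * t) * cos (μ * t)) := by
    simp [mode]
    ring
  simp_rw [hflux, inner_smul_left, real_inner_comm (fluxField h μ _)]
  rw [integral_const_mul, setIntegral_inner_gradient_fluxField hh hμ hsin (contDiff_mode κ)]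
  simp_rw [htrace]
  rw [intervalIntegral.integral_add (Continuous.intervalIntegrable (by fun_prop) _ _)
      (Continuous.intervalIntegrable (by fun_prop) _ _), intervalIntegral.integral_const_mul,
    intervalIntegral.integral_const_mul, integral_cosh_mul_cos (by positivity), hsin,
    tanh_eq_sinh_div_cosh]
  generalize (∫ t in 0..h, cos (κ * t) * cos (μ * t)) = I
  simp
  field_simp

theorem abs_setIntegral_inner_fluxField_cosFreq_le (hh : 0 < h) (k l : ℕ) :
    |∫ x in rightTriangle h,
        inner ℝ (fluxField h (cosFreq h k) x) (fluxField h (cosFreq h l) x)| ≤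
      h ^ 2 * ((if k = l then 1 / (2 * (π * (k + 1)) * tanh (π * (k + 1))) else 0) +
        1 / ((π * (k + 1)) ^ 2 + (π * (l + 1)) ^ 2)) := by
  have htanh : 0 < tanh (π * (k + 1)) := tanh_pos (by positivity)
  rw [setIntegral_inner_fluxField hh (cosFreq_pos hh k).ne' (cosFreq_pos hh l).ne'
      (sin_cosFreq_mul hh.ne' l),
    integral_cos_cosFreq_mul_cos_cosFreq hh, mul_add]
  refine (abs_add_le _ _).trans (add_le_add (le_of_eq ?_) ?_)
  · rw [cosFreq_mul hh.ne', cosFreq, abs_of_nonneg (by split_ifs <;> positivity)]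
    split_ifs
    · field_simp
    · simp
  · have hcos : |cos (cosFreq h k * h) * cos (cosFreq h l * h)| ≤ 1 := by
      rw [abs_mul]
      exact mul_le_one₀ (abs_cos_le_one _) (abs_nonneg _) (abs_cos_le_one _)
    calc |cos (cosFreq h k * h) * cos (cosFreq h l * h) / (cosFreq h k ^ 2 + cosFreq h l ^ 2)|
        ≤ 1 / (cosFreq h k ^ 2 + cosFreq h l ^ 2) := by
          rw [abs_div, abs_of_nonneg (by positivity : 0 ≤ cosFreq h k ^ 2 + cosFreq h l ^ 2)]
          gcongr
      _ = h ^ 2 * (1 / ((π * (k + 1)) ^ 2 + (π * (l + 1)) ^ 2)) := by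
          unfold cosFreq
          field_simp

theorem sum_abs_setIntegral_inner_fluxField_mul_perronWeight_le (hh : 0 < h) {z : ℝ} (hz : 0 < z)
    (hzπ : z < π) (htan : tan z + tanh z = 0) (s : Finset ℕ) (k : ℕ) :
    ∑ l ∈ s, |∫ x in rightTriangle h,
        inner ℝ (fluxField h (cosFreq h k) x) (fluxField h (cosFreq h l) x)| *
          perronWeight z (π * (l + 1)) ≤
      h ^ 2 / (2 * z * tanh z) * perronWeight z (π * (k + 1)) := by
  have hlt := pow_four_lt_pi_mul_pow_four ((abs_of_pos hz).trans_lt hzπ)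
  have hp (l : ℕ) : 0 < perronWeight z (π * (l + 1)) := perronWeight_pos (hlt l)
  have hgram := abs_setIntegral_inner_fluxField_cosFreq_le hh k
  have hlt_k := hlt k
  have hp_k := hp k
  have hm : 0 < π * (k + 1) := by positivity
  set m := π * (k + 1)
  have hdiag : ∑ l ∈ s, (if k = l then 1 / (2 * m * tanh m) else 0) * perronWeight z (π * (l + 1))
      ≤ 1 / (2 * m * tanh m) * perronWeight z m := by
    have htanh := tanh_pos hm
    simp only [ite_mul, zero_mul, Finset.sum_ite_eq]
    split_ifs
    · rfl
    · positivity
  have hoff : ∑ l ∈ s, perronWeight z (π * (l + 1)) / (m ^ 2 + (π * (l + 1)) ^ 2) ≤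
      perronWeight z m * (1 / (2 * z * tanh z) - 1 / (2 * m * tanh m)) :=
    sum_le_hasSum s (fun l _ => div_nonneg (hp l).le (by positivity))
      (hasSum_perronWeight_div_sq_add_sq hz.ne' htan hm.ne' hlt_k.ne')
  calc _ ≤ ∑ l ∈ s, h ^ 2 * ((if k = l then 1 / (2 * m * tanh m) else 0) +
          1 / (m ^ 2 + (π * (l + 1)) ^ 2)) * perronWeight z (π * (l + 1)) :=
        Finset.sum_le_sum fun l _ => mul_le_mul_of_nonneg_right (hgram l) (hp l).le
    _ = h ^ 2 * (∑ l ∈ s, (if k = l then 1 / (2 * m * tanh m) else 0) *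
            perronWeight z (π * (l + 1)) +
          ∑ l ∈ s, perronWeight z (π * (l + 1)) / (m ^ 2 + (π * (l + 1)) ^ 2)) := by
        rw [← Finset.sum_add_distrib, Finset.mul_sum]
        exact Finset.sum_congr rfl fun l _ => by ring
    _ ≤ h ^ 2 * (1 / (2 * m * tanh m) * perronWeight z m +
          perronWeight z m * (1 / (2 * z * tanh z) - 1 / (2 * m * tanh m))) := by
        gcongr
    _ = h ^ 2 / (2 * z * tanh z) * perronWeight z m := by ring

end CosineModes

/-! ### The trace inequality and its extremal -/

section TraceInequality

variable {h z : ℝ}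

theorem sum_sq_integral_mul_cos_cosFreq_le (hh : 0 < h) (hz : 0 < z) (hzπ : z < π)
    (htan : tan z + tanh z = 0) {w : ℝ² → ℝ} (hw : ContDiff ℝ 1 w) (s : Finset ℕ) :
    ∑ k ∈ s, (∫ t in 0..h, w !₂[h, t] * cos (cosFreq h k * t)) ^ 2 ≤
      h ^ 2 / (2 * z * tanh z) * ∫ x in rightTriangle h, ‖gradient w x‖ ^ 2 := by
  have hgrad : Continuous (gradient w) :=
    (InnerProductSpace.toDual ℝ ℝ²).symm.continuous.comp (hw.continuous_fderiv one_ne_zero)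
  have hC : 0 ≤ h ^ 2 / (2 * z * tanh z) := by
    have := tanh_pos hz
    positivity
  have hbessel := sum_norm_integral_inner_sq_le_of_schur (𝕜 := ℝ) (s := s)
    (v := fun k => fluxField h (cosFreq h k)) (p := fun k => perronWeight z (π * (k + 1)))
    (fun k => memLp_rightTriangle 2 (continuous_fluxField _))
    (memLp_rightTriangle 2 hgrad) hC
    (fun k _ => perronWeight_pos (pow_four_lt_pi_mul_pow_four ((abs_of_pos hz).trans_lt hzπ) k))
    (fun k _ => sum_abs_setIntegral_inner_fluxField_mul_perronWeight_le hh hz hzπ htan s k)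
  simpa only [norm_eq_abs, sq_abs, setIntegral_inner_gradient_fluxField hh (cosFreq_pos hh _).ne'
    (sin_cosFreq_mul hh.ne' _) hw] using hbessel

theorem mul_integral_sq_le_setIntegral_norm_gradient_sq (hh : 0 < h) (hz : 0 < z) (hzπ : z < π)
    (htan : tan z + tanh z = 0) {w : ℝ² → ℝ} (hw : ContDiff ℝ 1 w)
    (hmean : ∫ t in 0..h, w !₂[h, t] = 0) :
    z / h * tanh z * ∫ t in 0..h, w !₂[h, t] ^ 2 ≤
      ∫ x in rightTriangle h, ‖gradient w x‖ ^ 2 := by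
  have htrace : Continuous fun t => w !₂[h, t] := hw.continuous.comp (by fun_prop)
  have hmem : MemLp (fun t => w !₂[h, t]) 2 (volume.restrict (Set.Ioc 0 h)) :=
    (memLp_restrict_of_isCompact isCompact_Icc measurableSet_Icc htrace.continuousOn 2).mono_measure
      (Measure.restrict_mono Set.Ioc_subset_Icc_self le_rfl)
  have hparseval := hasSum_sq_integral_mul_cos hh hmem
  simp only [hmean, ne_eq, OfNat.ofNat_ne_zero, not_false_eq_true, zero_pow, zero_div,
    sub_zero] at hparseval
  have htanh := tanh_pos hz
  have hle : ∫ t in 0..h, w !₂[h, t] ^ 2 ≤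
      h / (z * tanh z) * ∫ x in rightTriangle h, ‖gradient w x‖ ^ 2 := by
    refine hasSum_le_of_sum_le hparseval fun s => ?_
    calc _ = 2 / h * ∑ k ∈ s, (∫ t in 0..h, w !₂[h, t] * cos (cosFreq h k * t)) ^ 2 :=
          (Finset.mul_sum ..).symm
      _ ≤ 2 / h * (h ^ 2 / (2 * z * tanh z) * ∫ x in rightTriangle h, ‖gradient w x‖ ^ 2) := by
          gcongr
          exact sum_sq_integral_mul_cos_cosFreq_le hh hz hzπ htan hw s
      _ = h / (z * tanh z) * ∫ x in rightTriangle h, ‖gradient w x‖ ^ 2 := by field_simp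
  calc _ ≤ z / h * tanh z * (h / (z * tanh z) * ∫ x in rightTriangle h, ‖gradient w x‖ ^ 2) := by
        gcongr
    _ = _ := by field_simp

end TraceInequality

section ExtremalMode

variable {h κ : ℝ}

theorem modeField_leg_eq_tanh_mul_mode (htan : tan (κ * h) + tanh (κ * h) = 0) (t : ℝ) :
    modeField κ !₂[h, t] 0 = tanh (κ * h) * mode κ !₂[h, t] := by
  have hcos : cos (κ * h) ≠ 0 := fun hcos => by
    have htanh : tanh (κ * h) = 0 := by simpa [tan_eq_sin_div_cos, hcos] using htan
    have hzero : κ * h = 0 := not_imp_not.1 tanh_ne_zero htanh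
    simp [hzero] at hcos
  have hrel : sin (κ * h) = -(tanh (κ * h) * cos (κ * h)) := by
    rw [← tan_mul_cos hcos, eq_neg_of_add_eq_zero_left htan]
    ring
  have hsinh : sinh (κ * h) = tanh (κ * h) * cosh (κ * h) := by
    rw [tanh_eq_sinh_div_cosh, div_mul_cancel₀ _ (cosh_pos _).ne']
  simp [modeField, mode, hrel, hsinh]
  ring

theorem integral_mode_leg_eq_zero (hh : 0 ≤ h) (hκh : κ * h ≠ 0)
    (htan : tan (κ * h) + tanh (κ * h) = 0) : ∫ t in 0..h, mode κ !₂[h, t] = 0 := by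
  have hflux := setIntegral_inner_gradient_modeField hh (w := fun _ => 1) contDiff_const κ
  simp only [modeField_leg_eq_tanh_mul_mode htan, gradient_fun_const, inner_zero_left,
    integral_zero, one_mul, intervalIntegral.integral_const_mul] at hflux
  exact (mul_eq_zero.1 hflux.symm).resolve_left (tanh_ne_zero hκh)

theorem setIntegral_norm_gradient_mode_sq (hh : 0 ≤ h)
    (htan : tan (κ * h) + tanh (κ * h) = 0) :
    ∫ x in rightTriangle h, ‖gradient (mode κ) x‖ ^ 2 =
      κ * tanh (κ * h) * ∫ t in 0..h, mode κ !₂[h, t] ^ 2 := by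
  calc ∫ x in rightTriangle h, ‖gradient (mode κ) x‖ ^ 2
      = κ * ∫ x in rightTriangle h, inner ℝ (gradient (mode κ) x) (modeField κ x) := by
        rw [← integral_const_mul]
        simp_rw [← real_inner_smul_right, ← gradient_mode, real_inner_self_eq_norm_sq]
    _ = κ * ∫ t in 0..h, tanh (κ * h) * mode κ !₂[h, t] ^ 2 := by
        rw [setIntegral_inner_gradient_modeField hh (contDiff_mode κ)]
        simp_rw [modeField_leg_eq_tanh_mul_mode htan, sq, mul_left_comm]
    _ = κ * tanh (κ * h) * ∫ t in 0..h, mode κ !₂[h, t] ^ 2 := by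
        rw [intervalIntegral.integral_const_mul, mul_assoc]

theorem integral_mode_leg_sq_pos (hh : 0 < h) (hκ : κ ≠ 0) :
    0 < ∫ t in 0..h, mode κ !₂[h, t] ^ 2 := by
  have hcont : Continuous fun t => mode κ !₂[h, t] :=
    (contDiff_mode κ (n := 0)).continuous.comp (by fun_prop)
  refine intervalIntegral.integral_pos hh (hcont.pow 2).continuousOn (fun t _ => sq_nonneg _)
    ⟨0, Set.left_mem_Icc.2 hh.le, ?_⟩
  have hcorner : 0 < mode κ !₂[h, 0] := by
    simp only [mode, Matrix.cons_val_zero, Matrix.cons_val_one, mul_zero, cos_zero, cosh_zero,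
      mul_one]
    linarith [one_lt_cosh.2 (mul_ne_zero hκ hh.ne'), neg_one_le_cos (κ * h)]
  positivity

end ExtremalMode

/-- The sharp constant `C₂(Ω,Γ)` in `‖w‖_{L²(Γ)} ≤ C₂ ‖∇w‖_{L²(Ω)}` for functions
with zero mean trace on `Γ`, where `Ω = {0 < x₂ < x₁ < h}` is an isosceles right
triangle and `Γ = {x₁ = h, x₂ ∈ [0,h]}` is one leg, equals
`((ẑ₀/h)·tanh ẑ₀)^(-1/2)`, where `ẑ₀` is the unique root of
`tan z + tanh z = 0` in `(0,π)` (`ẑ₀ ≈ 2.3650`). -/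
theorem triangle_one_leg_C2 (h : ℝ) (hh : 0 < h) (z₀ : ℝ)
    (hz₀ : z₀ ∈ Set.Ioo 0 π ∧ Real.tan z₀ + Real.tanh z₀ = 0)
    (huniq : ∀ z ∈ Set.Ioo (0:ℝ) π, Real.tan z + Real.tanh z = 0 → z = z₀) :
    IsLeast {C : ℝ |
      ∀ w : EuclideanSpace ℝ (Fin 2) → ℝ, ContDiff ℝ 1 w →
        (∫ t in (0:ℝ)..h, w !₂[h, t]) = 0 →
        Real.sqrt (∫ t in (0:ℝ)..h, (w !₂[h, t]) ^ 2) ≤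
          C * Real.sqrt (∫ x in {x : EuclideanSpace ℝ (Fin 2) |
            0 < x 1 ∧ x 1 < x 0 ∧ x 0 < h}, ‖gradient w x‖ ^ 2)}
      (1 / Real.sqrt (z₀ / h * Real.tanh z₀)) := by
  obtain ⟨⟨hz, hzπ⟩, htan⟩ := hz₀
  have hlam : 0 < z₀ / h * tanh z₀ := mul_pos (div_pos hz hh) (tanh_pos hz)
  have hκh : z₀ / h * h = z₀ := div_mul_cancel₀ _ hh.ne'
  have htanκ : tan (z₀ / h * h) + tanh (z₀ / h * h) = 0 := by rwa [hκh]
  refine ⟨fun w hw hmean => ?_, fun C hC => ?_⟩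
  · rw [one_div, ← sqrt_inv, ← sqrt_mul (inv_nonneg.2 hlam.le)]
    refine sqrt_le_sqrt ((le_inv_mul_iff₀ hlam).2 ?_)
    exact mul_integral_sq_le_setIntegral_norm_gradient_sq hh hz hzπ htan hw hmean
  · have hbound := hC (mode (z₀ / h)) (contDiff_mode _)
      (integral_mode_leg_eq_zero hh.le (by rw [hκh]; exact hz.ne') htanκ)
    have henergy := setIntegral_norm_gradient_mode_sq hh.le htanκ
    rw [hκh, rightTriangle] at henergy
    rw [henergy, sqrt_mul hlam.le, ← mul_assoc] at hbound
    have hpos := sqrt_pos.2 (integral_mode_leg_sq_pos hh (div_pos hz hh).ne')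
    exact (div_le_iff₀ (sqrt_pos.2 hlam)).2 (le_of_mul_le_mul_right (by rwa [one_mul]) hpos)
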